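/- Let k ≥ 3 be an integer and 0 < b < 1/k a constant. There exist n_1 = n_1(k,b) and c_0 = c_0(k,b) > 0 such that the following holds for every integer n ≥ n_1: if H is a (1,k)-partite (k+1)-graph with partition classes X, [n], |X| = n/k, and δ_1(N_H(x)) > (1/2 + b)·binom(n-1,k-1) for every x ∈ X, then for every c with 0 < c < c_0 there exists a matching M in H with |M| ≤ 2kcn such that for every balanced subset S ⊆ V(H) \ V(M) with |S| ≤ (k+1)c^{1.5} n/2, the induced subhypergraph H[V(M) ∪ S] has a perfect matching. -/

import Mathlib

/-- A perfect matching of the subhypergraph of `H` induced on the vertex set `Q`: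
a set of pairwise disjoint edges of `H`, each contained in `Q`, covering `Q`. -/
def HasPM {V : Type*} [DecidableEq V] (H : Finset (Finset V)) (Q : Finset V) : Prop :=
  ∃ M ⊆ H, (∀ e ∈ M, e ⊆ Q) ∧
    (M : Set (Finset V)).Pairwise (fun a b => Disjoint a b) ∧
    (∀ v ∈ Q, ∃ e ∈ M, v ∈ e)

open Finset

section Hypergraph

variable {V : Type*} [DecidableEq V]

theorem HasPM.empty (H : Finset (Finset V)) : HasPM H ∅ :=
  ⟨∅, by simp, by simp, by simp, by simp⟩

theorem HasPM.union {H : Finset (Finset V)} {P Q : Finset V} (hP : HasPM H P) (hQ : HasPM H Q)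
    (hPQ : Disjoint P Q) : HasPM H (P ∪ Q) := by
  obtain ⟨M, hM, hMP, hMd, hMc⟩ := hP
  obtain ⟨N, hN, hNQ, hNd, hNc⟩ := hQ
  refine ⟨M ∪ N, union_subset hM hN, ?_, ?_, ?_⟩
  · intro e he
    rcases mem_union.1 he with he | he
    · exact (hMP e he).trans subset_union_left
    · exact (hNQ e he).trans subset_union_right
  · intro e he f hf hef
    rcases mem_union.1 (mem_coe.1 he) with he | he <;>
      rcases mem_union.1 (mem_coe.1 hf) with hf | hf
    · exact hMd he hf hef
    · exact hPQ.mono (hMP e he) (hNQ f hf)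
    · exact (hPQ.mono (hMP f hf) (hNQ e he)).symm
    · exact hNd he hf hef
  · intro v hv
    rcases mem_union.1 hv with hv | hv
    · obtain ⟨e, he, hve⟩ := hMc v hv
      exact ⟨e, mem_union_left _ he, hve⟩
    · obtain ⟨e, he, hve⟩ := hNc v hv
      exact ⟨e, mem_union_right _ he, hve⟩

theorem HasPM.biUnion {H : Finset (Finset V)} {F : Finset (Finset V)}
    (hF : (F : Set (Finset V)).PairwiseDisjoint id) (hPM : ∀ W ∈ F, HasPM H W) :
    HasPM H (F.biUnion id) := by
  induction F using Finset.induction_on with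
  | empty => simpa using HasPM.empty H
  | insert W F hW ih =>
    rw [biUnion_insert]
    refine (hPM W (mem_insert_self _ _)).union
      (ih (hF.subset (by simp)) fun W' hW' => hPM W' (mem_insert_of_mem hW')) ?_
    rw [disjoint_biUnion_right]
    intro W' hW'
    exact hF (by simp) (by simp [hW']) (by rintro rfl; exact hW hW')

open Classical in
/-- Greedy selection of pairwise disjoint sets, driven by the potential
`∑ T, 2 ^ (-#{W ∈ F | R W T})`. -/
theorem exists_pairwiseDisjoint_family {𝒯 : Type*} [Fintype 𝒯] (P : Finset V → Prop)
    (R : Finset V → 𝒯 → Prop) (α : ℝ) (hα : α ≤ 2) (N d : ℕ)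
    (hstep : ∀ U : Finset V, #U ≤ N * d → ∀ w : 𝒯 → ℝ, (∀ T, 0 < w T) →
      ∃ W, Disjoint W U ∧ W.Nonempty ∧ #W ≤ d ∧ P W ∧
        α * ∑ T, w T ≤ ∑ T with R W T, w T)
    (m : ℕ) (hm : m ≤ N) :
    ∃ F : Finset (Finset V), (F : Set (Finset V)).PairwiseDisjoint id ∧
      (∀ W ∈ F, #W ≤ d ∧ P W) ∧ #F = m ∧
      ∑ T, (1 / 2 : ℝ) ^ #{W ∈ F | R W T} ≤ (1 - α / 2) ^ m * Fintype.card 𝒯 := by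
  induction m with
  | zero => exact ⟨∅, by simp, by simp, by simp, by simp⟩
  | succ m ih =>
    obtain ⟨F, hd, hP, hc, hpot⟩ := ih (by omega)
    obtain ⟨W, hWU, hWne, hWd, hPW, hw⟩ := hstep (F.biUnion id) (by
      refine (card_biUnion_le_card_mul _ _ d fun W hW => (hP W hW).1).trans ?_
      rw [hc]; exact Nat.mul_le_mul_right _ (by omega))
      (fun T => (1 / 2 : ℝ) ^ #{W ∈ F | R W T}) (fun T => by positivity)
    rw [disjoint_biUnion_right] at hWU
    have hWF : W ∉ F := fun h => hWne.ne_empty (by simpa using hWU W h)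
    refine ⟨insert W F, ?_, ?_, by rw [card_insert_of_notMem hWF, hc], ?_⟩
    · rw [coe_insert]
      exact hd.insert fun W' hW' _ => hWU W' hW'
    · intro W' hW'
      rcases mem_insert.1 hW' with rfl | h
      · exact ⟨hWd, hPW⟩
      · exact hP W' h
    · have key : ∑ T, (1 / 2 : ℝ) ^ #{W' ∈ insert W F | R W' T}
          = ∑ T, (1 / 2 : ℝ) ^ #{W ∈ F | R W T}
            - 1 / 2 * ∑ T with R W T, (1 / 2 : ℝ) ^ #{W ∈ F | R W T} := by
        rw [sum_filter, mul_sum, ← sum_sub_distrib]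
        refine sum_congr rfl fun T _ => ?_
        rw [filter_insert]
        split_ifs with h
        · rw [card_insert_of_notMem (by simp [hWF]), pow_succ]; ring
        · simp
      rw [key, pow_succ]
      have h1 : 0 ≤ 1 - α / 2 := by linarith
      nlinarith [mul_le_mul_of_nonneg_left hpot h1]

open Classical in
theorem exists_pairwiseDisjoint_family_forall {𝒯 : Type*} [Fintype 𝒯] (P : Finset V → Prop)
    (R : Finset V → 𝒯 → Prop) (α : ℝ) (hα : α ≤ 2) (N d : ℕ)
    (hstep : ∀ U : Finset V, #U ≤ N * d → ∀ w : 𝒯 → ℝ, (∀ T, 0 < w T) →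
      ∃ W, Disjoint W U ∧ W.Nonempty ∧ #W ≤ d ∧ P W ∧
        α * ∑ T, w T ≤ ∑ T with R W T, w T) :
    ∃ F : Finset (Finset V), (F : Set (Finset V)).PairwiseDisjoint id ∧
      (∀ W ∈ F, #W ≤ d ∧ P W) ∧ #F = N ∧
      ∀ T, (1 / 2 : ℝ) ^ #{W ∈ F | R W T} ≤ (1 - α / 2) ^ N * Fintype.card 𝒯 := by
  obtain ⟨F, hd, hP, hc, hpot⟩ := exists_pairwiseDisjoint_family P R α hα N d hstep N le_rfl
  exact ⟨F, hd, hP, hc, fun T => le_trans (single_le_sum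
    (f := fun T => (1 / 2 : ℝ) ^ #{W ∈ F | R W T}) (fun T _ => by positivity) (mem_univ T)) hpot⟩

end Hypergraph

/-- The number of functions that fail to be injective or that hit `B`. -/
theorem card_not_injective_or_hits_mul_le {I β : Type*} [Fintype I] [Fintype β] [DecidableEq I]
    [DecidableEq β] (B : Finset β) :
    #{f : I → β | ¬ (Function.Injective f ∧ ∀ i, f i ∉ B)} * Fintype.card β ≤
      (Fintype.card I ^ 2 + Fintype.card I * #B) * Fintype.card β ^ Fintype.card I := by
  have hcol (i j : I) (hij : i ≠ j) :
      #{f : I → β | f i = f j} * Fintype.card β ≤ Fintype.card β ^ Fintype.card I := by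
    rw [← card_univ (α := β), ← card_product, card_univ, ← Fintype.card_fun, ← card_univ]
    refine card_le_card_of_injOn (fun p => Function.update p.1 i p.2) (by simp) ?_
    rintro ⟨f, a⟩ hf ⟨g, b⟩ hg h
    simp only [coe_product, coe_filter, mem_univ, true_and, coe_univ, Set.mem_prod,
      Set.mem_ofPred_eq, Set.mem_univ, and_true] at hf hg
    dsimp only at h
    have hab : a = b := by simpa using congrFun h i
    have hne : ∀ l, l ≠ i → f l = g l := fun l hl => by
      simpa [Function.update_of_ne hl] using congrFun h l
    refine Prod.ext (funext fun l => ?_) hab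
    rcases eq_or_ne l i with rfl | hl
    · exact (hf.trans (hne j hij.symm)).trans hg.symm
    · exact hne l hl
  have hhit (i : I) :
      #{f : I → β | f i ∈ B} * Fintype.card β ≤ #B * Fintype.card β ^ Fintype.card I := by
    rw [← card_univ (α := β), ← card_product, card_univ, ← Fintype.card_fun,
      ← card_univ (α := I → β), ← card_product]
    refine card_le_card_of_injOn (fun p => (p.1 i, Function.update p.1 i p.2)) ?_ ?_
    · rintro ⟨f, a⟩ hf
      simpa using hf
    · rintro ⟨f, a⟩ hf ⟨g, b⟩ hg h
      obtain ⟨h1, h⟩ := Prod.ext_iff.1 h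
      dsimp only at h h1
      have hab : a = b := by simpa using congrFun h i
      refine Prod.ext (funext fun l => ?_) hab
      rcases eq_or_ne l i with rfl | hl
      · exact h1
      · simpa [Function.update_of_ne hl] using congrFun h l
  have hsub : univ.filter (fun f : I → β => ¬ (Function.Injective f ∧ ∀ i, f i ∉ B)) ⊆
      ((univ : Finset I).offDiag.biUnion fun p => {f : I → β | f p.1 = f p.2}) ∪
        (univ : Finset I).biUnion fun i => {f : I → β | f i ∈ B} := by
    intro f hf
    simp only [Function.Injective, mem_filter, mem_univ, true_and, not_and_or, not_forall,
      not_not] at hf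
    simp only [mem_union, mem_biUnion, mem_offDiag, mem_filter, mem_univ, true_and, Prod.exists]
    rcases hf with ⟨i, j, h, hij⟩ | ⟨i, hi⟩
    · exact Or.inl ⟨i, j, hij, h⟩
    · exact Or.inr ⟨i, hi⟩
  calc _ ≤ (∑ p ∈ (univ : Finset I).offDiag, #{f : I → β | f p.1 = f p.2} +
        ∑ i, #{f : I → β | f i ∈ B}) * Fintype.card β :=
        Nat.mul_le_mul_right _ ((card_le_card hsub).trans ((card_union_le _ _).trans
          (add_le_add card_biUnion_le card_biUnion_le)))
    _ ≤ #(univ : Finset I).offDiag * Fintype.card β ^ Fintype.card I +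
        Fintype.card I * (#B * Fintype.card β ^ Fintype.card I) := by
        rw [add_mul, sum_mul, sum_mul]
        refine add_le_add ?_ ?_
        · rw [← smul_eq_mul]
          exact sum_le_card_nsmul _ _ _ fun p hp => hcol _ _ (mem_offDiag.1 hp).2.2
        · rw [← smul_eq_mul (Fintype.card I), ← card_univ (α := I)]
          exact sum_le_card_nsmul _ _ _ fun i _ => hhit i
    _ ≤ _ := by
        rw [add_mul, mul_assoc]
        refine Nat.add_le_add_right (Nat.mul_le_mul_right _ ?_) _
        rw [offDiag_card, card_univ, sq]
        exact Nat.sub_le _ _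

section Partite

variable {X Y : Type*} [DecidableEq X] [DecidableEq Y]

/-- The vertex set consisting of `x` and the values of the tuple `w`. -/
def starEdge {ι : Type*} [Fintype ι] (x : X) (w : ι → Y) : Finset (X ⊕ Y) :=
  disjSum {x} (univ.image w)

/-- The vertex set consisting of the values of the tuples `y` and `z`. -/
def tupleVertices {ι κ : Type*} [Fintype ι] [Fintype κ] (y : ι → X) (z : κ → Y) :
    Finset (X ⊕ Y) :=
  disjSum (univ.image y) (univ.image z)

theorem card_tupleVertices_le {ι κ : Type*} [Fintype ι] [Fintype κ] (y : ι → X) (z : κ → Y) :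
    #(tupleVertices y z) ≤ Fintype.card ι + Fintype.card κ := by
  rw [tupleVertices, card_disjSum]
  exact add_le_add card_image_le card_image_le

theorem hasPM_tupleVertices {K : ℕ} {ι : Type*} [Fintype ι] {H : Finset (Finset (X ⊕ Y))}
    {y : ι → X} {z : ι ⊕ ι × Fin K → Y}
    (hy : Function.Injective y) (hz : Function.Injective z)
    (hH : ∀ i, starEdge (y i)
      (Fin.cons (z (.inl i)) (fun j => z (.inr (i, j))) : Fin (K + 1) → Y) ∈ H) :
    HasPM H (tupleVertices y z) := by
  refine ⟨univ.image fun i => starEdge (y i)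
    (Fin.cons (z (.inl i)) (fun j => z (.inr (i, j))) : Fin (K + 1) → Y), ?_, ?_, ?_, ?_⟩
  · simpa [subset_iff] using hH
  · simp only [mem_image, mem_univ, true_and, forall_exists_index, forall_apply_eq_imp_iff]
    rintro i (x | p) h
    · simp only [starEdge, inl_mem_disjSum, mem_singleton] at h
      simp [tupleVertices, h]
    · simp only [starEdge, inr_mem_disjSum, mem_image, mem_univ, true_and, Fin.exists_fin_succ,
        Fin.cons_zero, Fin.cons_succ] at h
      simp only [tupleVertices, inr_mem_disjSum, mem_image, mem_univ, true_and]
      rcases h with h | ⟨j, h⟩ <;> exact ⟨_, h⟩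
  · simp only [Set.Pairwise, coe_image, coe_univ, Set.image_univ, Set.mem_range,
      forall_exists_index, forall_apply_eq_imp_iff]
    intro i i' hne
    have hii : i ≠ i' := by rintro rfl; exact hne rfl
    rw [disjoint_left]
    rintro (x | p) h h'
    · simp only [starEdge, inl_mem_disjSum, mem_singleton] at h h'
      exact hii (hy (h.symm.trans h'))
    · simp only [starEdge, inr_mem_disjSum, mem_image, mem_univ, true_and, Fin.exists_fin_succ,
        Fin.cons_zero, Fin.cons_succ] at h h'
      rcases h with h | ⟨j, h⟩ <;> rcases h' with h' | ⟨j', h'⟩ <;>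
        have := hz (h.trans h'.symm) <;> simp_all
  · rintro (x | p) h
    · simp only [tupleVertices, inl_mem_disjSum, mem_image, mem_univ, true_and] at h
      obtain ⟨i, rfl⟩ := h
      exact ⟨_, mem_image_of_mem _ (mem_univ i), by simp [starEdge]⟩
    · simp only [tupleVertices, inr_mem_disjSum, mem_image, mem_univ, true_and] at h
      obtain ⟨i | ⟨i, j⟩, rfl⟩ := h
      · exact ⟨_, mem_image_of_mem _ (mem_univ i), by simp [starEdge, Fin.exists_fin_succ]⟩
      · exact ⟨_, mem_image_of_mem _ (mem_univ i), by simp [starEdge, Fin.exists_fin_succ]⟩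

/-- Swapping each `z (inl i)` for `v i` frees the edge formed by `x` and the `z (inl i)`. -/
theorem hasPM_tupleVertices_union {K : ℕ} {ι : Type*} [Fintype ι] {H : Finset (Finset (X ⊕ Y))}
    {y : ι → X} {z : ι ⊕ ι × Fin K → Y} {x : X} {v : ι → Y}
    (hy : Function.Injective y) (hz : Function.Injective z) (hv : Function.Injective v)
    (hxy : ∀ i, y i ≠ x) (hzv : ∀ i j, z i ≠ v j)
    (hx : starEdge x (fun i => z (.inl i)) ∈ H)
    (hH : ∀ i, starEdge (y i)
      (Fin.cons (v i) (fun j => z (.inr (i, j))) : Fin (K + 1) → Y) ∈ H) :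
    HasPM H (tupleVertices y z ∪ starEdge x v) := by
  have hz' : Function.Injective (Sum.elim v fun p => z (.inr p)) :=
    hv.sumElim (hz.comp Sum.inr_injective) fun i p => (hzv _ _).symm
  have h1 : HasPM H (starEdge x fun i => z (.inl i)) :=
    ⟨{starEdge x fun i => z (.inl i)}, by simpa using hx, by simp, by simp, by simp⟩
  have h2 := hasPM_tupleVertices (z := Sum.elim v fun p => z (.inr p)) hy hz' hH
  convert h1.union h2 ?_ using 1
  · ext (a | a)
    · simp [tupleVertices, starEdge, or_comm]
    · simp only [tupleVertices, starEdge, mem_union, inr_mem_disjSum, mem_image, mem_univ,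
        true_and, Sum.exists, Sum.elim_inl, Sum.elim_inr]
      tauto
  · rw [disjoint_left]
    rintro (a | a) h h'
    · simp only [starEdge, tupleVertices, inl_mem_disjSum, mem_singleton, mem_image, mem_univ,
        true_and] at h h'
      obtain ⟨i, rfl⟩ := h'
      exact hxy i h
    · simp only [starEdge, tupleVertices, inr_mem_disjSum, mem_image, mem_univ,
        true_and, Sum.exists, Sum.elim_inl, Sum.elim_inr] at h h'
      obtain ⟨i, rfl⟩ := h
      rcases h' with ⟨j, h'⟩ | ⟨p, h'⟩
      · exact hzv _ _ h'.symm
      · have := hz h'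
        simp at this

open Classical in
theorem hasPM_biUnion_union {k : ℕ} {H F : Finset (Finset (X ⊕ Y))} {S : Finset (X ⊕ Y)} (t : ℕ)
    (hF : (F : Set (Finset (X ⊕ Y))).PairwiseDisjoint id) (hPM : ∀ W ∈ F, HasPM H W)
    (habs : ∀ (x : X) (v : Fin k ↪ Y), t ≤ #{W ∈ F | HasPM H (W ∪ starEdge x v)})
    (hS : Disjoint (F.biUnion id) S) (hl : #S.toLeft = t) (hr : #S.toRight = k * t) :
    HasPM H (F.biUnion id ∪ S) := by
  induction t generalizing F S with
  | zero =>
    have hS0 : S = ∅ := by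
      rw [← card_eq_zero, ← card_toLeft_add_card_toRight, hl, hr]; simp
    simpa [hS0] using HasPM.biUnion hF hPM
  | succ t ih =>
    obtain ⟨x, hx⟩ : S.toLeft.Nonempty := card_pos.1 (by omega)
    obtain ⟨s, hs, hsk⟩ : ∃ s ⊆ S.toRight, #s = k :=
      exists_subset_card_eq (by rw [hr]; exact Nat.le_mul_of_pos_right _ (by omega))
    let v : Fin k ↪ Y :=
      (s.equivFinOfCardEq hsk).symm.toEmbedding.trans (Function.Embedding.subtype _)
    have hvs : univ.image v = s := by
      ext a
      simp only [mem_image, mem_univ, true_and]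
      constructor
      · rintro ⟨i, rfl⟩
        exact ((s.equivFinOfCardEq hsk).symm i).2
      · intro ha
        exact ⟨s.equivFinOfCardEq hsk ⟨a, ha⟩, by simp [v]⟩
    have hTS : starEdge x v ⊆ S := by
      rintro (a | a) h
      · simp only [starEdge, inl_mem_disjSum, mem_singleton] at h
        exact h ▸ mem_toLeft.1 hx
      · rw [starEdge, inr_mem_disjSum, hvs] at h
        exact mem_toRight.1 (hs h)
    obtain ⟨W, hW⟩ : {W ∈ F | HasPM H (W ∪ starEdge x v)}.Nonempty :=
      card_pos.1 (by have := habs x v; omega)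
    rw [mem_filter] at hW
    have hFW : F.biUnion id = W ∪ (F.erase W).biUnion id := by
      conv_lhs => rw [← insert_erase hW.1, biUnion_insert, id]
    have hd : Disjoint W ((F.erase W).biUnion id) := by
      rw [disjoint_biUnion_right]
      intro W' hW'
      exact hF hW.1 (mem_of_mem_erase hW') (ne_of_mem_erase hW').symm
    rw [hFW, disjoint_union_left] at hS
    have hleft : (S \ starEdge x v).toLeft = S.toLeft.erase x := by
      ext a; simp [starEdge, and_comm]
    have hright : (S \ starEdge x v).toRight = S.toRight \ s := by
      rw [← hvs]; ext a; simp [starEdge]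
    have hrest := ih (F := F.erase W) (S := S \ starEdge x v)
      (hF.subset (by simp)) (fun W' hW' => hPM W' (mem_of_mem_erase hW'))
      (fun x' v' => by
        rw [filter_erase]
        have := habs x' v'
        have := pred_card_le_card_erase (s := {W ∈ F | HasPM H (W ∪ starEdge x' v')}) (a := W)
        omega)
      (hS.2.mono_right sdiff_subset)
      (by rw [hleft, card_erase_of_mem hx, hl]; rfl)
      (by rw [hright, card_sdiff_of_subset hs, hr, hsk, Nat.mul_succ, Nat.add_sub_cancel])
    have hsplit : F.biUnion id ∪ S =
        (W ∪ starEdge x v) ∪ ((F.erase W).biUnion id ∪ (S \ starEdge x v)) := by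
      rw [hFW]
      conv_lhs => rw [← union_sdiff_of_subset hTS]
      ext a; simp only [mem_union]; tauto
    rw [hsplit]
    refine hW.2.union hrest ?_
    rw [disjoint_union_left, disjoint_union_right, disjoint_union_right]
    exact ⟨⟨hd, hS.1.mono_right sdiff_subset⟩, (hS.2.mono_right hTS).symm, disjoint_sdiff⟩

variable [Fintype Y]

/-- The tuples `a` that together with `x` and `p` form an edge. -/
def linkTuples (H : Finset (Finset (X ⊕ Y))) (K : ℕ) (x : X) (p : Y) : Finset (Fin K → Y) :=
  {a | starEdge x (Fin.cons p a : Fin (K + 1) → Y) ∈ H}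

theorem card_edgeTuples_ge {H : Finset (Finset (X ⊕ Y))} {K : ℕ} {x : X} {γ : ℝ}
    (hD : ∀ p, γ * (Fintype.card Y : ℝ) ^ K ≤ #(linkTuples H K x p)) :
    γ * (Fintype.card Y : ℝ) ^ (K + 1) ≤ #{u : Fin (K + 1) → Y | starEdge x u ∈ H} := by
  have h : #((univ : Finset Y).sigma fun p => linkTuples H K x p) ≤
      #{u : Fin (K + 1) → Y | starEdge x u ∈ H} := by
    refine card_le_card_of_injOn (fun q => (Fin.cons q.1 q.2 : Fin (K + 1) → Y)) ?_ ?_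
    · rintro ⟨p, a⟩ h
      simpa [linkTuples] using h
    · rintro ⟨p, a⟩ _ ⟨p', a'⟩ _ h
      obtain ⟨rfl, rfl⟩ := Fin.cons_inj.1 h
      rfl
  rw [card_sigma] at h
  calc γ * (Fintype.card Y : ℝ) ^ (K + 1) = ∑ _p : Y, γ * (Fintype.card Y : ℝ) ^ K := by
        rw [sum_const, card_univ, nsmul_eq_mul]; ring
    _ ≤ ∑ p : Y, (#(linkTuples H K x p) : ℝ) := sum_le_sum fun p _ => hD p
    _ ≤ _ := by exact_mod_cast h

theorem card_linkTuples_inter_ge {H : Finset (Finset (X ⊕ Y))} {K : ℕ} {x : X} {β : ℝ}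
    (hD : ∀ p, (1 / 2 + β / 2) * (Fintype.card Y : ℝ) ^ K ≤ #(linkTuples H K x p)) (p q : Y) :
    β * (Fintype.card Y : ℝ) ^ K ≤ #(linkTuples H K x p ∩ linkTuples H K x q) := by
  have h1 := card_union_add_card_inter (linkTuples H K x p) (linkTuples H K x q)
  have h2 : #(linkTuples H K x p ∪ linkTuples H K x q) ≤ Fintype.card Y ^ K :=
    (card_le_univ _).trans (by simp)
  have h1' : (#(linkTuples H K x p ∪ linkTuples H K x q) : ℝ) +
      #(linkTuples H K x p ∩ linkTuples H K x q) =
      #(linkTuples H K x p) + #(linkTuples H K x q) := by exact_mod_cast h1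
  have h2' : (#(linkTuples H K x p ∪ linkTuples H K x q) : ℝ) ≤ (Fintype.card Y : ℝ) ^ K := by
    exact_mod_cast h2
  linarith [hD p, hD q]

theorem factorial_mul_card_le_card_linkTuples {H : Finset (Finset (X ⊕ Y))} {K : ℕ}
    (hH : ∀ e ∈ H, ∃ (x : X) (s : Finset Y),
      #s = K + 1 ∧ e = insert (Sum.inl x) (s.image Sum.inr)) (x : X) (p : Y) :
    K.factorial * #{e ∈ H | Sum.inl x ∈ e ∧ Sum.inr p ∈ e} ≤ #(linkTuples H K x p) := by
  rw [card_eq_sum_card_fiberwise (s := linkTuples H K x p)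
    (f := fun a => starEdge x (Fin.cons p a : Fin (K + 1) → Y))
    (t := {e ∈ H | Sum.inl x ∈ e ∧ Sum.inr p ∈ e})
    (by
      intro a ha
      simp only [linkTuples, coe_filter, mem_univ, true_and, Set.mem_ofPred_eq] at ha
      rw [mem_coe, mem_filter]
      exact ⟨ha, by simp [starEdge], by simp [starEdge, Fin.exists_fin_succ]⟩),
    mul_comm, ← smul_eq_mul]
  refine card_nsmul_le_sum _ _ _ fun e he => ?_
  obtain ⟨heH, hxe, hpe⟩ := mem_filter.1 he
  obtain ⟨x', s, hs, rfl⟩ := hH e heH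
  obtain rfl : x = x' := by simpa using hxe
  have hps : p ∈ s := by simpa using hpe
  have ht : #(s.erase p) = K := by rw [card_erase_of_mem hps, hs]; rfl
  have hcard : Fintype.card (Fin K ≃ s.erase p) = K.factorial := by
    rw [Fintype.card_equiv ((s.erase p).equivFinOfCardEq ht).symm, Fintype.card_fin]
  rw [← hcard, ← card_univ]
  have hedge (σ : Fin K ≃ s.erase p) :
      starEdge x (Fin.cons p (fun i => (σ i : Y)) : Fin (K + 1) → Y) =
        insert (Sum.inl x) (s.image Sum.inr) := by
    ext (a | a)
    · simp [starEdge]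
    · simp only [starEdge, inr_mem_disjSum, mem_image, mem_univ, true_and, Fin.exists_fin_succ,
        Fin.cons_zero, Fin.cons_succ, mem_insert, reduceCtorEq, false_or, Sum.inr.injEq,
        exists_eq_right]
      constructor
      · rintro (rfl | ⟨i, rfl⟩)
        · exact hps
        · exact mem_of_mem_erase (σ i).2
      · intro ha
        rcases eq_or_ne p a with h | h
        · exact Or.inl h
        · exact Or.inr ⟨σ.symm ⟨a, mem_erase.2 ⟨h.symm, ha⟩⟩, by simp⟩
  refine card_le_card_of_injOn (fun σ i => (σ i : Y)) ?_ ?_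
  · intro σ _
    rw [mem_coe, mem_filter, linkTuples, mem_filter]
    exact ⟨⟨mem_univ _, (hedge σ).symm ▸ heH⟩, hedge σ⟩
  · intro σ _ τ _ h
    exact Equiv.ext fun i => Subtype.ext (congrFun h i)

/-- The tuples consist of edges in which each `p.2 (inl i)` may be swapped for `v i`, and the
freed vertices form an edge with `x`. -/
def IsSwap {K : ℕ} (H : Finset (Finset (X ⊕ Y))) (x : X) (v : Fin (K + 1) → Y)
    (p : (Fin (K + 1) → X) × (Fin (K + 1) ⊕ Fin (K + 1) × Fin K → Y)) : Prop :=
  starEdge x (fun i => p.2 (.inl i)) ∈ H ∧ ∀ i,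
    starEdge (p.1 i)
      (Fin.cons (p.2 (.inl i)) (fun j => p.2 (.inr (i, j))) : Fin (K + 1) → Y) ∈ H ∧
    starEdge (p.1 i) (Fin.cons (v i) (fun j => p.2 (.inr (i, j))) : Fin (K + 1) → Y) ∈ H

variable [Fintype X]

open Classical in
theorem card_isSwap_ge {H : Finset (Finset (X ⊕ Y))} {K : ℕ} {β : ℝ} (hβ : 0 ≤ β)
    (hD : ∀ x p, (1 / 2 + β / 2) * (Fintype.card Y : ℝ) ^ K ≤ #(linkTuples H K x p))
    (x : X) (v : Fin (K + 1) → Y) :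
    β ^ (K + 1) / 2 *
      Fintype.card ((Fin (K + 1) → X) × (Fin (K + 1) ⊕ Fin (K + 1) × Fin K → Y)) ≤
      (#{p | IsSwap H x v p} : ℝ) := by
  set E : Finset (Fin (K + 1) → Y) := {u | starEdge x u ∈ H} with hE
  set T := ((univ : Finset (Fin (K + 1) → X)) ×ˢ E).sigma fun q =>
    Fintype.piFinset fun i => linkTuples H K (q.1 i) (q.2 i) ∩ linkTuples H K (q.1 i) (v i)
    with hT
  have hle : #T ≤ #{p | IsSwap H x v p} := by
    refine card_le_card_of_injOn
      (fun q => (q.1.1, Sum.elim q.1.2 fun r => q.2 r.1 r.2)) ?_ ?_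
    · rintro ⟨⟨y, u⟩, a⟩ h
      rw [mem_coe, mem_filter]
      exact ⟨mem_univ _, by simpa [hT, hE, linkTuples, IsSwap] using h⟩
    · rintro ⟨⟨y, u⟩, a⟩ _ ⟨⟨y', u'⟩, a'⟩ _ h
      obtain ⟨h1, h2⟩ := Prod.ext_iff.1 h
      dsimp only at h1 h2
      have h3 : u = u' := funext fun i => congrFun h2 (.inl i)
      have h4 : a = a' := funext fun i => funext fun j => congrFun h2 (.inr (i, j))
      subst h1 h3 h4
      rfl
  have hEc : (1 / 2 : ℝ) * (Fintype.card Y : ℝ) ^ (K + 1) ≤ #E := by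
    refine le_trans ?_ (card_edgeTuples_ge (hD x))
    have : (0 : ℝ) ≤ (Fintype.card Y : ℝ) ^ (K + 1) := by positivity
    nlinarith
  have hterm (q : (Fin (K + 1) → X) × (Fin (K + 1) → Y)) :
      (β * (Fintype.card Y : ℝ) ^ K) ^ (K + 1) ≤
        (#(Fintype.piFinset fun i =>
          linkTuples H K (q.1 i) (q.2 i) ∩ linkTuples H K (q.1 i) (v i)) : ℝ) := by
    rw [Fintype.card_piFinset, Nat.cast_prod]
    calc (β * (Fintype.card Y : ℝ) ^ K) ^ (K + 1)
        = ∏ _i : Fin (K + 1), β * (Fintype.card Y : ℝ) ^ K := by simp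
      _ ≤ _ := prod_le_prod (fun i _ => by positivity)
        fun i _ => card_linkTuples_inter_ge (hD (q.1 i)) _ _
  calc _ = (Fintype.card X : ℝ) ^ (K + 1) * (1 / 2 * (Fintype.card Y : ℝ) ^ (K + 1)) *
        (β * (Fintype.card Y : ℝ) ^ K) ^ (K + 1) := by
        simp only [Fintype.card_prod, Fintype.card_fun, Fintype.card_sum, Fintype.card_fin]
        push_cast
        rw [mul_pow, ← pow_mul]
        ring
    _ ≤ (Fintype.card X : ℝ) ^ (K + 1) * #E * (β * (Fintype.card Y : ℝ) ^ K) ^ (K + 1) := by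
        gcongr
    _ = ∑ _q ∈ (univ : Finset (Fin (K + 1) → X)) ×ˢ E,
        (β * (Fintype.card Y : ℝ) ^ K) ^ (K + 1) := by
        rw [sum_const, card_product, card_univ, nsmul_eq_mul]
        simp
    _ ≤ (#T : ℝ) := by
        rw [hT, card_sigma, Nat.cast_sum]
        exact sum_le_sum fun q _ => hterm q
    _ ≤ _ := by exact_mod_cast hle

/-- A swap on distinct vertices outside `U` and outside the set to be absorbed. -/
def IsAbsorbing {K : ℕ} (H : Finset (Finset (X ⊕ Y))) (U : Finset (X ⊕ Y)) (x : X)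
    (v : Fin (K + 1) → Y)
    (p : (Fin (K + 1) → X) × (Fin (K + 1) ⊕ Fin (K + 1) × Fin K → Y)) : Prop :=
  IsSwap H x v p ∧
    (Function.Injective p.1 ∧ ∀ i, p.1 i ∉ insert x U.toLeft) ∧
    (Function.Injective p.2 ∧ ∀ i, p.2 i ∉ U.toRight ∪ univ.image v)

open Classical in
theorem card_isAbsorbing_ge {H : Finset (Finset (X ⊕ Y))} {K L : ℕ} {β : ℝ} (hβ : 0 ≤ β)
    (hD : ∀ x p, (1 / 2 + β / 2) * (Fintype.card Y : ℝ) ^ K ≤ #(linkTuples H K x p))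
    (hX : 0 < Fintype.card X) (hY : 0 < Fintype.card Y)
    (hL : (((K + 1 : ℕ) ^ 2 + (K + 1 : ℕ) * (L + 1)) / Fintype.card X +
      (((K + 1 : ℕ) ^ 2) ^ 2 + (K + 1 : ℕ) ^ 2 * (L + (K + 1 : ℕ))) / Fintype.card Y : ℝ) ≤
      β ^ (K + 1) / 4)
    {U : Finset (X ⊕ Y)} (hU : #U ≤ L) (x : X) (v : Fin (K + 1) → Y) :
    β ^ (K + 1) / 4 *
      Fintype.card ((Fin (K + 1) → X) × (Fin (K + 1) ⊕ Fin (K + 1) × Fin K → Y)) ≤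
      (#{p | IsAbsorbing H U x v p} : ℝ) := by
  have hUlr := card_toLeft_add_card_toRight (u := U)
  have hBX : #(insert x U.toLeft) ≤ L + 1 := (card_insert_le _ _).trans (by omega)
  have hBY : #(U.toRight ∪ univ.image v) ≤ L + (K + 1) :=
    (card_union_le _ _).trans (add_le_add (by omega) (card_image_le.trans (by simp)))
  have hI : Fintype.card (Fin (K + 1) ⊕ Fin (K + 1) × Fin K) = (K + 1) ^ 2 := by
    simp; ring
  set bad1 : Finset (Fin (K + 1) → X) :=
    {f | ¬ (Function.Injective f ∧ ∀ i, f i ∉ insert x U.toLeft)} with hb1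
  set bad2 : Finset (Fin (K + 1) ⊕ Fin (K + 1) × Fin K → Y) :=
    {f | ¬ (Function.Injective f ∧ ∀ i, f i ∉ U.toRight ∪ univ.image v)} with hb2
  have hsub : univ.filter (IsSwap H x v) ⊆
      univ.filter (IsAbsorbing H U x v) ∪ (bad1 ×ˢ univ ∪ univ ×ˢ bad2) := by
    intro p hp
    simp only [mem_filter, mem_univ, true_and] at hp
    simp only [mem_union, mem_product, hb1, hb2, mem_filter, mem_univ, true_and, and_true,
      IsAbsorbing]
    tauto
  have hc := (card_le_card hsub).trans ((card_union_le _ _).trans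
    (Nat.add_le_add_left (card_union_le _ _) _))
  rw [card_product, card_product, card_univ, card_univ] at hc
  have hc' : (#{p | IsSwap H x v p} : ℝ) ≤ #{p | IsAbsorbing H U x v p} +
      (#bad1 * Fintype.card (Fin (K + 1) ⊕ Fin (K + 1) × Fin K → Y) +
        Fintype.card (Fin (K + 1) → X) * #bad2) := by exact_mod_cast hc
  have hX' : (0 : ℝ) < Fintype.card X := by exact_mod_cast hX
  have hY' : (0 : ℝ) < Fintype.card Y := by exact_mod_cast hY
  have hb1' : (#bad1 : ℝ) ≤ ((K + 1 : ℕ) ^ 2 + (K + 1 : ℕ) * (L + 1)) / Fintype.card X *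
      Fintype.card (Fin (K + 1) → X) := by
    rw [div_mul_eq_mul_div, le_div_iff₀ hX']
    have : #bad1 * Fintype.card X ≤
        ((K + 1) ^ 2 + (K + 1) * (L + 1)) * Fintype.card (Fin (K + 1) → X) := by
      refine le_trans (le_of_eq ?_)
        ((card_not_injective_or_hits_mul_le (I := Fin (K + 1)) (insert x U.toLeft)).trans ?_)
      · congr!
      rw [Fintype.card_fun, Fintype.card_fin]
      gcongr
    exact_mod_cast this
  have hb2' : (#bad2 : ℝ) ≤
      (((K + 1 : ℕ) ^ 2) ^ 2 + (K + 1 : ℕ) ^ 2 * (L + (K + 1 : ℕ))) / Fintype.card Y *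
      Fintype.card (Fin (K + 1) ⊕ Fin (K + 1) × Fin K → Y) := by
    rw [div_mul_eq_mul_div, le_div_iff₀ hY']
    have : #bad2 * Fintype.card Y ≤ (((K + 1) ^ 2) ^ 2 + (K + 1) ^ 2 * (L + (K + 1))) *
        Fintype.card (Fin (K + 1) ⊕ Fin (K + 1) × Fin K → Y) := by
      refine le_trans (le_of_eq ?_) ((card_not_injective_or_hits_mul_le
        (I := Fin (K + 1) ⊕ Fin (K + 1) × Fin K) (U.toRight ∪ univ.image v)).trans ?_)
      · congr!
      rw [Fintype.card_fun, hI]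
      gcongr
    exact_mod_cast this
  have hs := card_isSwap_ge hβ hD x v
  rw [Fintype.card_prod, Nat.cast_mul] at hs ⊢
  set A : ℝ := ((Fintype.card (Fin (K + 1) → X) : ℕ) : ℝ)
  set B : ℝ := ((Fintype.card (Fin (K + 1) ⊕ Fin (K + 1) × Fin K → Y) : ℕ) : ℝ)
  have hA : 0 ≤ A := Nat.cast_nonneg _
  have hB : 0 ≤ B := Nat.cast_nonneg _
  have e1 := mul_le_mul_of_nonneg_right hb1' hB
  have e2 := mul_le_mul_of_nonneg_left hb2' hA
  have e3 := mul_le_mul_of_nonneg_right hL (mul_nonneg hA hB)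
  nlinarith

/-- Averaging over all absorbing tuples. -/
theorem exists_absorber {H : Finset (Finset (X ⊕ Y))} {K L : ℕ} {β : ℝ} (hβ : 0 < β)
    (hD : ∀ x p, (1 / 2 + β / 2) * (Fintype.card Y : ℝ) ^ K ≤ #(linkTuples H K x p))
    (hX : 0 < Fintype.card X) (hY : K + 1 ≤ Fintype.card Y)
    (hL : (((K + 1 : ℕ) ^ 2 + (K + 1 : ℕ) * (L + 1)) / Fintype.card X +
      (((K + 1 : ℕ) ^ 2) ^ 2 + (K + 1 : ℕ) ^ 2 * (L + (K + 1 : ℕ))) / Fintype.card Y : ℝ) ≤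
      β ^ (K + 1) / 4)
    {U : Finset (X ⊕ Y)} (hU : #U ≤ L) (w : X × (Fin (K + 1) ↪ Y) → ℝ) (hw : ∀ T, 0 < w T) :
    open Classical in
    ∃ W, Disjoint W U ∧ W.Nonempty ∧ #W ≤ (K + 1) * (K + 2) ∧ HasPM H W ∧
      β ^ (K + 1) / 4 * ∑ T, w T ≤ ∑ T with HasPM H (W ∪ starEdge T.1 T.2), w T := by
  classical
  have hY0 : 0 < Fintype.card Y := by omega
  have : Nonempty X := Fintype.card_pos_iff.1 hX
  have : Nonempty Y := Fintype.card_pos_iff.1 hY0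
  have : Nonempty (Fin (K + 1) ↪ Y) :=
    Function.Embedding.nonempty_of_card_le (by simpa using hY)
  have hsum : 0 < ∑ T, w T := sum_pos (fun T _ => hw T) univ_nonempty
  obtain ⟨p, -, hp⟩ := exists_le_of_sum_le
    (s := (univ : Finset ((Fin (K + 1) → X) × (Fin (K + 1) ⊕ Fin (K + 1) × Fin K → Y))))
    (f := fun _ => β ^ (K + 1) / 4 * ∑ T, w T)
    (g := fun p => ∑ T with IsAbsorbing H U T.1 T.2 p, w T) univ_nonempty (by
      simp_rw [sum_filter]
      rw [sum_comm, sum_const, card_univ, nsmul_eq_mul, ← mul_assoc, mul_sum]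
      refine sum_le_sum fun T _ => ?_
      rw [← sum_filter, sum_const, nsmul_eq_mul]
      refine mul_le_mul_of_nonneg_right ?_ (hw T).le
      rw [mul_comm]
      exact card_isAbsorbing_ge hβ.le hD hX hY0 hL hU T.1 T.2)
  have hpos : 0 < ∑ T with IsAbsorbing H U T.1 T.2 p, w T := lt_of_lt_of_le (by positivity) hp
  obtain ⟨T₀, hT₀⟩ : (univ.filter fun T : X × (Fin (K + 1) ↪ Y) =>
      IsAbsorbing H U T.1 T.2 p).Nonempty := by
    by_contra h
    rw [not_nonempty_iff_eq_empty] at h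
    simp [h] at hpos
  obtain ⟨⟨-, hE⟩, ⟨hy, hyU⟩, hz, hzU⟩ := (mem_filter.1 hT₀).2
  refine ⟨tupleVertices p.1 p.2, ?_, ⟨.inl (p.1 0), by simp [tupleVertices]⟩,
    (card_tupleVertices_le _ _).trans ?_, hasPM_tupleVertices hy hz fun i => (hE i).1, ?_⟩
  · rw [disjoint_left]
    rintro (a | a) h
    · simp only [tupleVertices, inl_mem_disjSum, mem_image, mem_univ, true_and] at h
      obtain ⟨i, rfl⟩ := h
      exact fun h => hyU i (mem_insert_of_mem (mem_toLeft.2 h))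
    · simp only [tupleVertices, inr_mem_disjSum, mem_image, mem_univ, true_and] at h
      obtain ⟨i, rfl⟩ := h
      exact fun h => hzU i (mem_union_left _ (mem_toRight.2 h))
  · simp only [Fintype.card_fin, Fintype.card_sum, Fintype.card_prod]
    nlinarith
  · refine hp.trans (sum_le_sum_of_subset_of_nonneg ?_ fun T _ _ => (hw T).le)
    intro T hT
    simp only [mem_filter, mem_univ, true_and] at hT ⊢
    obtain ⟨⟨hx, hE⟩, ⟨hy, hyU⟩, hz, hzU⟩ := hT
    refine hasPM_tupleVertices_union hy hz T.2.injective
      (fun i h => hyU i (h ▸ mem_insert_self _ _)) (fun i j h => hzU i ?_) hx fun i => (hE i).2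
    rw [h]
    exact mem_union_right _ (mem_image_of_mem _ (mem_univ j))

end Partite

/-- Passing from the falling factorial to the power costs a factor close to `1`. -/
theorem half_add_half_mul_pow_le {K n : ℕ} {b : ℝ} (hb0 : 0 < b) (hb1 : b ≤ 1 / 2)
    (hn : 2 * (K : ℝ) ^ 2 / b ≤ n) (hKn : K + 1 ≤ n) :
    (1 / 2 + b / 2) * (n : ℝ) ^ K ≤
      K.factorial * ((1 / 2 + b) * (Nat.choose (n - 1) K : ℝ)) := by
  have hn0 : (0 : ℝ) < n := by exact_mod_cast (by omega : 0 < n)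
  have h1 : (n - K) ^ K ≤ K.factorial * Nat.choose (n - 1) K := by
    rw [← Nat.descFactorial_eq_factorial_mul_choose]
    have := Nat.pow_sub_le_descFactorial (n - 1) K
    rwa [show n - 1 + 1 - K = n - K by omega] at this
  have h2 : ((n : ℝ) - K) ^ K ≤ K.factorial * (Nat.choose (n - 1) K : ℝ) := by
    rw [← Nat.cast_sub (by omega)]
    exact_mod_cast h1
  have hKle : (K : ℝ) / n ≤ 1 := by
    rw [div_le_one hn0]
    exact_mod_cast (by omega : K ≤ n)
  have h3 : 1 - (K : ℝ) ^ 2 / n ≤ (1 - (K : ℝ) / n) ^ K := by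
    have := one_add_mul_le_pow (a := -((K : ℝ) / n)) (by linarith) K
    calc 1 - (K : ℝ) ^ 2 / n = 1 + K * -((K : ℝ) / n) := by ring
      _ ≤ _ := by simpa [sub_eq_add_neg] using this
  have h4 : (n : ℝ) ^ K * (1 - (K : ℝ) / n) ^ K = ((n : ℝ) - K) ^ K := by
    rw [← mul_pow]
    congr 1
    field_simp
  have h5 : (K : ℝ) ^ 2 / n ≤ b / 2 := by
    rw [div_le_iff₀ hb0] at hn
    rw [div_le_iff₀ hn0]
    linarith
  have hnK : (0 : ℝ) ≤ (n : ℝ) ^ K := by positivity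
  calc (1 / 2 + b / 2) * (n : ℝ) ^ K ≤ ((1 / 2 + b) * (1 - (K : ℝ) ^ 2 / n)) * (n : ℝ) ^ K := by
        refine mul_le_mul_of_nonneg_right ?_ hnK
        nlinarith
    _ ≤ ((1 / 2 + b) * (1 - (K : ℝ) / n) ^ K) * (n : ℝ) ^ K := by gcongr
    _ = (1 / 2 + b) * ((n : ℝ) - K) ^ K := by rw [← h4]; ring
    _ ≤ (1 / 2 + b) * (K.factorial * (Nat.choose (n - 1) K : ℝ)) := by gcongr
    _ = _ := by ring

theorem exists_forall_mul_log_lt {A B : ℝ} (hA : 0 < A) :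
    ∃ y₀ : ℝ, 1 ≤ y₀ ∧ ∀ y, y₀ ≤ y → B * Real.log y < A * y := by
  have h := (Real.isLittleO_log_id_atTop.const_mul_left B).def (half_pos hA)
  obtain ⟨y₀, hy₀⟩ := Filter.eventually_atTop.1 h
  refine ⟨max y₀ 1, le_max_right _ _, fun y hy => ?_⟩
  have hy1 : 1 ≤ y := (le_max_right _ _).trans hy
  have := hy₀ y ((le_max_left _ _).trans hy)
  rw [Real.norm_eq_abs, Real.norm_eq_abs, id, abs_of_pos (by linarith : 0 < y)] at this
  have := (le_abs_self _).trans this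
  nlinarith

/-- Disjoint `r`-subsets of `Q` number at most `#Q / r`. -/
theorem card_mul_le_card_of_pairwise_disjoint {V : Type*} [DecidableEq V]
    {M : Finset (Finset V)} {Q : Finset V} {r : ℕ} (hr : ∀ e ∈ M, #e = r)
    (hd : (M : Set (Finset V)).Pairwise fun a b => Disjoint a b) (hQ : ∀ e ∈ M, e ⊆ Q) :
    #M * r ≤ #Q := by
  rw [← smul_eq_mul, ← sum_const, ← sum_congr rfl hr]
  have h := card_biUnion (t := id) fun a ha b hb hab => hd (mem_coe.2 ha) (mem_coe.2 hb) hab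
  exact h.symm.trans_le (card_le_card (biUnion_subset.2 hQ))

theorem avoidance_cost_le {k N n x c B : ℝ} (hk : 1 ≤ k) (hN : 1 ≤ N) (hn : 0 < n)
    (hx : n / (2 * k) ≤ x) (hNc : N ≤ 2 * c * n) (hB : 24 * k ^ 4 * c ≤ B) :
    (k ^ 2 + k * (N * (k * (k + 1)) + 1)) / x +
      ((k ^ 2) ^ 2 + k ^ 2 * (N * (k * (k + 1)) + k)) / n ≤ B := by
  have hk0 : 0 < k := by linarith
  have hx' : 0 < n / (2 * k) := by positivity
  have k2 : k ≤ k ^ 2 := by nlinarith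
  have k3 : k ^ 2 ≤ k ^ 3 := by nlinarith
  have k4 : k ^ 3 ≤ k ^ 4 := by nlinarith [pow_pos hk0 3]
  have hNk2 : k ^ 2 ≤ N * k ^ 4 := by nlinarith [pow_pos hk0 4]
  have hNk3 : k ^ 3 ≤ N * k ^ 4 := by nlinarith [pow_pos hk0 4]
  have hNk4 : k ^ 4 ≤ N * k ^ 4 := by nlinarith [pow_pos hk0 4]
  have hNk3' : N * k ^ 3 ≤ N * k ^ 4 := by gcongr
  calc _ ≤ (k ^ 2 + k * (N * (k * (k + 1)) + 1)) / (n / (2 * k)) +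
        ((k ^ 2) ^ 2 + k ^ 2 * (N * (k * (k + 1)) + k)) / n := by gcongr
    _ = (2 * k ^ 3 + 2 * k ^ 2 + 2 * N * k ^ 4 + 2 * N * k ^ 3 + k ^ 4 + N * k ^ 4 +
        N * k ^ 3 + k ^ 3) / n := by field_simp; ring
    _ ≤ 12 * (N * k ^ 4) / n := by gcongr; linarith
    _ ≤ 12 * (2 * c * n * k ^ 4) / n := by gcongr
    _ = 24 * k ^ 4 * c := by field_simp; ring
    _ ≤ B := hB

theorem le_of_half_pow_le {α y : ℝ} {n m t Z r : ℕ} (hα0 : 0 ≤ α) (hα : α ≤ 2) (hy : 0 < y)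
    (hny : (n : ℝ) ≤ y ^ 3) (hym : y ≤ m) (ht : (t : ℝ) ≤ α / 4 * y)
    (hlog : 3 * r * Real.log y < α / 4 * y)
    (hZ : (1 / 2 : ℝ) ^ Z ≤ (1 - α / 2) ^ m * (n : ℝ) ^ r) : t ≤ Z := by
  by_contra! h
  have h1 : Real.exp (-t) ≤ (1 / 2 : ℝ) ^ Z := by
    calc Real.exp (-t) = Real.exp (-1) ^ t := by rw [← Real.exp_nat_mul]; ring_nf
      _ ≤ (1 / 2 : ℝ) ^ t := by
        refine pow_le_pow_left₀ (Real.exp_pos _).le ?_ _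
        rw [Real.exp_neg, one_div]
        refine inv_anti₀ (by norm_num) ?_
        linarith [Real.add_one_le_exp (1 : ℝ)]
      _ ≤ (1 / 2 : ℝ) ^ Z := pow_le_pow_of_le_one (by norm_num) (by norm_num) h.le
  have h2 : (1 - α / 2) ^ m ≤ Real.exp (-(α / 2 * y)) := by
    calc (1 - α / 2) ^ m ≤ Real.exp (-(α / 2)) ^ m :=
          pow_le_pow_left₀ (by linarith) (by linarith [Real.add_one_le_exp (-(α / 2))]) _
      _ = Real.exp (-(α / 2 * m)) := by rw [← Real.exp_nat_mul]; ring_nf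
      _ ≤ _ := by gcongr
  have h3 : (n : ℝ) ^ r ≤ Real.exp (3 * r * Real.log y) := by
    calc (n : ℝ) ^ r ≤ (y ^ 3) ^ r := by gcongr
      _ = Real.exp (Real.log y) ^ (3 * r) := by rw [Real.exp_log hy, pow_mul]
      _ = _ := by rw [← Real.exp_nat_mul]; push_cast; ring_nf
  have h4 : Real.exp (-t) ≤ Real.exp (-(α / 2 * y) + 3 * r * Real.log y) := by
    rw [Real.exp_add]
    exact h1.trans (hZ.trans (mul_le_mul h2 h3 (by positivity) (by positivity)))
  rw [Real.exp_le_exp] at h4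
  linarith

theorem card_filter_isLeft {X Y : Type*} (S : Finset (X ⊕ Y)) :
    #{v ∈ S | v.isLeft = true} = #S.toLeft := by
  rw [← card_map (s := S.toLeft) Function.Embedding.inl]
  congr 1
  ext (a | a) <;> simp

theorem card_filter_isRight {X Y : Type*} (S : Finset (X ⊕ Y)) :
    #{v ∈ S | v.isRight = true} = #S.toRight := by
  rw [← card_map (s := S.toRight) Function.Embedding.inr]
  congr 1
  ext (a | a) <;> simp

/-- absorbing lemma: Let `k ≥ 3` and `0 < b < 1/k`. There exist
`n₁ = n₁(k,b)` and `c₀ = c₀(k,b) > 0` such that for every `n ≥ n₁`: if `H` is a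
`(1,k)`-partite `(k+1)`-graph with partition classes `X = Fin (n/k)`, `[n]` and
`δ₁(N_H(x)) > (1/2 + b)·C(n-1,k-1)` for every `x ∈ X`, then for every
`0 < c < c₀` there is a matching `M` in `H` with `|M| ≤ 2kcn` such that for every
balanced `S ⊆ V(H) \ V(M)` with `|S| ≤ (k+1)·c^{1.5}·n/2`, the induced
subhypergraph `H[V(M) ∪ S]` has a perfect matching. -/
theorem absorbing_matching (k : ℕ) (hk : 3 ≤ k) (b : ℝ)
    (hb0 : 0 < b) (hb1 : b < 1 / (k : ℝ)) :
    ∃ (n₁ : ℕ) (c₀ : ℝ), 0 < c₀ ∧ ∀ n : ℕ, n₁ ≤ n →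
    ∀ H : Finset (Finset (Fin (n / k) ⊕ Fin n)),
      (∀ e ∈ H, ∃ (x : Fin (n / k)) (s : Finset (Fin n)),
        s.card = k ∧ e = insert (Sum.inl x) (s.image Sum.inr)) →
      (∀ (x : Fin (n / k)) (v : Fin n),
        (1 / 2 + b) * (Nat.choose (n - 1) (k - 1) : ℝ)
          < ((H.filter (fun e => Sum.inl x ∈ e ∧ Sum.inr v ∈ e)).card : ℝ)) →
      ∀ c : ℝ, 0 < c → c < c₀ →
      ∃ M ⊆ H, (M : Set (Finset (Fin (n / k) ⊕ Fin n))).Pairwise (fun a b => Disjoint a b) ∧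
        (M.card : ℝ) ≤ 2 * k * c * n ∧
        ∀ S : Finset (Fin (n / k) ⊕ Fin n),
          (∀ v ∈ S, ∀ e ∈ M, v ∉ e) →
          (S.filter (fun v => v.isRight = true)).card
            = k * (S.filter (fun v => v.isLeft = true)).card →
          (S.card : ℝ) ≤ (k + 1) * c ^ ((3 : ℝ) / 2) * n / 2 →
          HasPM H (M.biUnion id ∪ S) := by
  obtain ⟨K, rfl⟩ : ∃ K, k = K + 1 := ⟨k - 1, by omega⟩
  have hk1 : (1 : ℝ) ≤ ((K + 1 : ℕ) : ℝ) := by exact_mod_cast (by omega : 1 ≤ K + 1)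
  have hb2 : b ≤ 1 / 2 := hb1.le.trans
    (one_div_le_one_div_of_le (by norm_num) (by exact_mod_cast (by omega : 2 ≤ K + 1)))
  set α : ℝ := b ^ (K + 1) / 4 with hα
  have hα0 : 0 < α := by positivity
  have hbk1 : b ^ (K + 1) ≤ 1 := pow_le_one₀ hb0.le (by linarith)
  have hα1 : α ≤ 1 := by linarith
  obtain ⟨y₀, hy₀1, hy₀⟩ := exists_forall_mul_log_lt (A := α / 4) (B := 3 * (K + 2 : ℕ))
    (by positivity)
  refine ⟨max (2 * (K + 1)) (max ⌈2 * (K : ℝ) ^ 2 / b⌉₊ ⌈y₀ ^ 3⌉₊),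
    min (α ^ 2 / 4) (α / (24 * ((K + 1 : ℕ) : ℝ) ^ 4)), by positivity, ?_⟩
  intro n hn H hH hdeg c hc0 hc
  simp only [max_le_iff, Nat.ceil_le] at hn
  obtain ⟨hn1, hn2, hn3⟩ := hn
  obtain ⟨hc1, hc2⟩ := lt_min_iff.1 hc
  have hnpos : (0 : ℝ) < n := by exact_mod_cast (by omega : 0 < n)
  have hsqrt : c ^ ((3 : ℝ) / 2) = √c * c := by
    rw [show (3 : ℝ) / 2 = 1 / 2 + 1 by norm_num, Real.rpow_add hc0, Real.rpow_one,
      ← Real.sqrt_eq_rpow]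
  have hcardS {S : Finset (Fin (n / (K + 1)) ⊕ Fin n)}
      (hbal : (S.filter (fun v => v.isRight = true)).card
        = (K + 1) * (S.filter (fun v => v.isLeft = true)).card)
      (hS : (S.card : ℝ) ≤ ((K + 1 : ℕ) + 1) * c ^ ((3 : ℝ) / 2) * n / 2) :
      (#S.toLeft : ℝ) ≤ √c * c * n / 2 := by
    rw [card_filter_isLeft, card_filter_isRight] at hbal
    rw [← card_toLeft_add_card_toRight, hbal, hsqrt] at hS
    push_cast at hS
    have hK : (0 : ℝ) < (K : ℝ) + 1 + 1 := by positivity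
    refine le_of_mul_le_mul_left ?_ hK
    linarith
  by_cases hsmall : √c * c * n / 2 < 1
  · refine ⟨∅, by simp, by simp, by simp; positivity, fun S _ hbal hS => ?_⟩
    have h0 : #S.toLeft = 0 := by
      have := (hcardS hbal hS).trans_lt hsmall
      exact_mod_cast Nat.lt_one_iff.1 (by exact_mod_cast this)
    rw [card_filter_isLeft, card_filter_isRight, h0] at hbal
    have : S = ∅ := by
      rw [← card_eq_zero, ← card_toLeft_add_card_toRight, h0, hbal]; simp
    simpa [this] using HasPM.empty H
  push Not at hsmall
  set y : ℝ := c * n with hy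
  have hypos : 0 < y := by positivity
  have hsq : √c ^ 2 = c := Real.sq_sqrt hc0.le
  have hcn : (n : ℝ) ≤ y ^ 3 := by
    have h1 : 1 ≤ (√c * c * n) ^ 2 := one_le_pow₀ (by linarith)
    calc (n : ℝ) = n * 1 := (mul_one _).symm
      _ ≤ n * (√c * c * n) ^ 2 := by gcongr
      _ = n * (√c ^ 2 * c ^ 2 * n ^ 2) := by ring
      _ = y ^ 3 := by rw [hsq, hy]; ring
  have hyy₀ : y₀ ≤ y := le_of_pow_le_pow_left₀ three_ne_zero hypos.le (hn3.trans hcn)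
  have hsqrtα : √c ≤ α / 2 := by
    rw [Real.sqrt_le_left (by positivity)]
    linarith [hc1, (by ring : (α / 2) ^ 2 = α ^ 2 / 4)]
  set N := ⌈y⌉₊ with hN
  have hyN : y ≤ N := Nat.le_ceil _
  have hN2 : (N : ℝ) ≤ 2 * c * n := by
    linarith [(Nat.ceil_lt_add_one hypos.le).le, (by ring : 2 * c * n = 2 * (c * n))]
  have hD (x : Fin (n / (K + 1))) (p : Fin n) :
      (1 / 2 + b / 2) * (Fintype.card (Fin n) : ℝ) ^ K ≤ #(linkTuples H K x p) := by
    rw [Fintype.card_fin]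
    refine (half_add_half_mul_pow_le hb0 hb2 hn2 (by omega)).trans ?_
    have h1 : (K.factorial : ℝ) * #{e ∈ H | Sum.inl x ∈ e ∧ Sum.inr p ∈ e} ≤
        #(linkTuples H K x p) := by
      exact_mod_cast factorial_mul_card_le_card_linkTuples hH x p
    refine le_trans ?_ h1
    gcongr
    exact (hdeg x p).le
  have hXdiv : n < (K + 1) * (n / (K + 1)) + (K + 1) := by
    have := Nat.div_add_mod n (K + 1)
    have := Nat.mod_lt n (by omega : 0 < K + 1)
    omega
  have hXpos : 0 < n / (K + 1) := Nat.div_pos (by omega) (by omega)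
  have hXlow : (n : ℝ) / (2 * (K + 1 : ℕ)) ≤ ((n / (K + 1) : ℕ) : ℝ) := by
    rw [div_le_iff₀ (by positivity)]
    have : n ≤ (n / (K + 1)) * (2 * (K + 1)) := by nlinarith
    exact_mod_cast this
  have hcost := avoidance_cost_le (N := N) hk1 (hy₀1.trans (hyy₀.trans hyN)) hnpos hXlow hN2
    (B := α) (by
      rw [lt_div_iff₀ (by positivity)] at hc2
      linarith)
  obtain ⟨F, hFd, hFP, hFc, hpot⟩ := exists_pairwiseDisjoint_family_forall
    (𝒯 := Fin (n / (K + 1)) × (Fin (K + 1) ↪ Fin n)) (HasPM H)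
    (fun W T => HasPM H (W ∪ starEdge T.1 T.2)) α (by linarith) N ((K + 1) * (K + 2))
    (fun U hU w hw => exists_absorber hb0 hD (by simpa using hXpos) (by simp; omega)
      (by
        simp only [Fintype.card_fin]
        push_cast at hcost ⊢
        rw [show (K : ℝ) + 2 = K + 1 + 1 by ring]
        exact hcost) hU w hw)
  obtain ⟨M, hMH, hMQ, hMd, hMc⟩ := HasPM.biUnion hFd fun W hW => (hFP W hW).2
  have hMU : M.biUnion id = F.biUnion id := by
    refine subset_antisymm (biUnion_subset.2 hMQ) fun v hv => ?_
    obtain ⟨e, he, hve⟩ := hMc v hv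
    exact mem_biUnion.2 ⟨e, he, hve⟩
  refine ⟨M, hMH, hMd, ?_, fun S hSM hbal hS => ?_⟩
  · have h1 := card_mul_le_card_of_pairwise_disjoint (r := K + 2) (fun e he => by
      obtain ⟨x, s, hs, rfl⟩ := hH e (hMH he)
      rw [card_insert_of_notMem (by simp), card_image_of_injective _ Sum.inr_injective, hs])
      hMd hMQ
    have h2 := card_biUnion_le_card_mul F id _ fun W hW => (hFP W hW).1
    rw [hFc] at h2
    have h3 : #M ≤ N * (K + 1) := by
      refine Nat.le_of_mul_le_mul_right ((h1.trans h2).trans_eq ?_) (Nat.succ_pos (K + 1))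
      rw [mul_assoc]
    calc (#M : ℝ) ≤ N * (K + 1 : ℕ) := by exact_mod_cast h3
      _ ≤ 2 * c * n * (K + 1 : ℕ) := by gcongr
      _ = _ := by ring
  · rw [hMU]
    have ht := hcardS hbal hS
    rw [card_filter_isLeft, card_filter_isRight] at hbal
    refine hasPM_biUnion_union (k := K + 1) #S.toLeft hFd (fun W hW => (hFP W hW).2)
      (fun x v => ?_) ?_ rfl hbal
    · refine le_of_half_pow_le (r := K + 2) hα0.le (by linarith) hypos hcn hyN
        (ht.trans ?_) (hy₀ y hyy₀) ((hpot (x, v)).trans ?_)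
      · calc √c * c * n / 2 = √c * y / 2 := by rw [hy]; ring
          _ ≤ α / 2 * y / 2 := by gcongr
          _ = _ := by ring
      · have hcard : Fintype.card (Fin (n / (K + 1)) × (Fin (K + 1) ↪ Fin n)) ≤
            n ^ (K + 2) := by
          rw [Fintype.card_prod, Fintype.card_embedding_eq, Fintype.card_fin, Fintype.card_fin,
            Fintype.card_fin, pow_succ' n (K + 1)]
          exact Nat.mul_le_mul (Nat.div_le_self _ _) (Nat.descFactorial_le_pow _ _)
        have : (0 : ℝ) ≤ 1 - α / 2 := by linarith
        gcongr
        exact_mod_cast hcard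
    · rw [← hMU, disjoint_biUnion_left]
      intro e he
      rw [disjoint_left]
      exact fun v hve hvS => hSM v hvS e he hve
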